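/- arXiv:2308.08080 — 2 statements merged into one kernel-verified Lean document; each statement's English description precedes it below -/
import Mathlib

section
/- In the tensor-triangulated adjunction setting described in the context, let G be a strong ⊕-generator for 𝒯. Then the following are equivalent: (1) f_*G is a strong ⊕-generator for 𝒮; (2) the unit 1_𝒮 belongs to ⟨f_*G⟩̄_n for some n ≥ 0. -/
/-!
Call a morphism `K`-ghost if it is annihilated by every map from a shift of `K`. Covering `X` by a
coproduct of shifts of `K` gives a universal ghost out of `X`, and iterating this shows that
`X ∈ ⟨K⟩̄ₙ` if and only if every composite of `n` ghosts out of `X` is zero. Hence, if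
`W ∈ ⟨K⟩̄ₗ`, composites of `l` `K`-ghosts are `W`-ghosts, and `⟨W⟩̄ₙ ⊆ ⟨K⟩̄ₗₙ`.

Now let `K = f_* G` with `⟨G⟩̄ₗ = 𝒯` and `𝟙 ∈ ⟨K⟩̄ₙ`. Tensoring with `X` gives `X ∈ ⟨K ⊗ X⟩̄ₙ`,
while the projection formula puts `K ⊗ X` in the image of `f_*`, hence in `⟨K⟩̄ₗ`. So `X ∈ ⟨K⟩̄ₗₙ`.

The octahedral axiom is not available: the categories are only assumed to be pretriangulated. The
characterization by ghosts survives because in its proof weak kernels can replace fibres.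
-/

open CategoryTheory Limits Pretriangulated MonoidalCategory

universe v u v₂ u₂

namespace Stmt

variable {C : Type u} [Category.{v} C]

/-- `X` is a retract (direct summand) of `Y`. -/
def IsRetract (X Y : C) : Prop := ∃ (i : X ⟶ Y) (p : Y ⟶ X), i ≫ p = 𝟙 X

section Big

variable [HasZeroObject C] [Preadditive C] [HasShift C ℤ]
  [∀ n : ℤ, (shiftFunctor C n).Additive] [Pretriangulated C]

/-- The objects of `⟨G⟩̄₁`: the smallest collection of objects containing `G` that is
closed under shifts, arbitrary small coproducts, and direct summands (retracts). -/
def bigOne (G : C) : Set C :=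
  ⋂₀ {S : Set C | G ∈ S ∧ (∀ X ∈ S, ∀ n : ℤ, (X⟦n⟧ : C) ∈ S) ∧
      (∀ (ι : Type v) (f : ι → C) (_ : HasCoproduct f), (∀ i, f i ∈ S) → (∐ f) ∈ S) ∧
      (∀ X Y : C, Y ∈ S → IsRetract X Y → X ∈ S)}

/-- The objects of `⟨G⟩̄ₙ`: `⟨G⟩̄₀` consists of the objects isomorphic to `0`;
`⟨G⟩̄₁` is `bigOne G`; for `n ≥ 2`, `⟨G⟩̄ₙ` consists of the direct summands of objects `E`
fitting in a distinguished triangle `A ⟶ E ⟶ B ⟶ A⟦1⟧` with `A ∈ ⟨G⟩̄ₙ₋₁` and `B ∈ ⟨G⟩̄₁`. -/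
def bigLevel (G : C) : ℕ → Set C
  | 0 => {X | IsZero X}
  | 1 => bigOne G
  | (n + 2) => {X | ∃ (E A B : C) (f : A ⟶ E) (g : E ⟶ B) (h : B ⟶ A⟦(1 : ℤ)⟧),
      (Triangle.mk f g h ∈ distTriang C) ∧ A ∈ bigLevel G (n + 1) ∧ B ∈ bigOne G ∧
      IsRetract X E}

end Big

section Retracts

lemma isRetract_iff_nonempty_retract {X Y : C} : IsRetract X Y ↔ Nonempty (Retract X Y) :=
  ⟨fun ⟨i, r, h⟩ => ⟨⟨i, r, h⟩⟩, fun ⟨h⟩ => ⟨h.i, h.r, h.retract⟩⟩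

lemma IsRetract.refl (X : C) : IsRetract X X :=
  isRetract_iff_nonempty_retract.2 ⟨.refl X⟩

lemma IsRetract.of_iso {X Y : C} (e : X ≅ Y) : IsRetract X Y :=
  isRetract_iff_nonempty_retract.2 ⟨.ofIso e⟩

lemma IsRetract.trans {X Y Z : C} (h : IsRetract X Y) (h' : IsRetract Y Z) : IsRetract X Z := by
  rw [isRetract_iff_nonempty_retract] at *
  exact Nonempty.map2 (fun r r' => r.trans r') h h'

lemma IsRetract.map {D : Type u₂} [Category.{v₂} D] (Φ : C ⥤ D) {X Y : C} (h : IsRetract X Y) :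
    IsRetract (Φ.obj X) (Φ.obj Y) := by
  rw [isRetract_iff_nonempty_retract] at *
  exact h.map (·.map Φ)

end Retracts

section BigOne

variable [HasShift C ℤ] {G : C}

lemma self_mem_bigOne (G : C) : G ∈ bigOne G := fun _ hS => hS.1

lemma shift_mem_bigOne {X : C} (hX : X ∈ bigOne G) (n : ℤ) : (X⟦n⟧ : C) ∈ bigOne G :=
  fun S hS => hS.2.1 X (hX S hS) n

lemma coproduct_mem_bigOne {ι : Type v} {f : ι → C} [h : HasCoproduct f]
    (hf : ∀ i, f i ∈ bigOne G) : (∐ f) ∈ bigOne G :=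
  fun S hS => hS.2.2.1 ι f h fun i => hf i S hS

lemma mem_bigOne_of_isRetract {X Y : C} (hY : Y ∈ bigOne G) (h : IsRetract X Y) : X ∈ bigOne G :=
  fun S hS => hS.2.2.2 X Y (hY S hS) h

lemma map_mem_bigOne {D : Type u₂} [Category.{v} D] [HasShift D ℤ] (Φ : C ⥤ D)
    [Φ.CommShift ℤ] [∀ J : Type v, PreservesColimitsOfShape (Discrete J) Φ] {X : C}
    (hX : X ∈ bigOne G) : Φ.obj X ∈ bigOne (Φ.obj G) := by
  refine hX {Y | Φ.obj Y ∈ bigOne (Φ.obj G)} ⟨self_mem_bigOne _, ?_, ?_, ?_⟩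
  · intro Y hY n
    exact mem_bigOne_of_isRetract (shift_mem_bigOne hY n) (.of_iso ((Φ.commShiftIso n).app Y))
  · intro ι f _ hf
    have : HasCoproduct fun i => Φ.obj (f i) :=
      ⟨⟨_, isColimitOfHasCoproductOfPreservesColimit Φ f⟩⟩
    exact mem_bigOne_of_isRetract (coproduct_mem_bigOne hf) (.of_iso (PreservesCoproduct.iso Φ f))
  · intro Y Z hZ h
    exact mem_bigOne_of_isRetract hZ (h.map Φ)

end BigOne

section Ghosts

variable [HasZeroMorphisms C] [HasShift C ℤ]

/-- The `G`-ghosts: the morphisms annihilated by every map from a shift of `G`. -/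
def ghosts (G : C) : MorphismProperty C := fun X _ f => ∀ (n : ℤ) (a : G⟦n⟧ ⟶ X), a ≫ f = 0

/-- The `n`-fold composites of `G`-ghosts; for `n = 0` every morphism is allowed, as in the
zeroth power of an ideal. -/
def ghostPow (G : C) : ℕ → MorphismProperty C
  | 0 => ⊤
  | n + 1 => (ghostPow G n).comp (ghosts G)

variable {G : C}

lemma eq_zero_of_ghosts_self {X Y : C} {f : X ⟶ Y} (hf : ghosts X f) : f = 0 :=
  zero_of_epi_comp (shiftZero ℤ X).hom (hf 0 _)

lemma ghosts_precomp {X Y Z : C} (a : X ⟶ Y) {f : Y ⟶ Z} (hf : ghosts G f) :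
    ghosts G (a ≫ f) := fun n b => by
  rw [← Category.assoc, hf n]

lemma ghostPow_precomp {n : ℕ} {X Y Z : C} (a : X ⟶ Y) {f : Y ⟶ Z} (hf : ghostPow G n f) :
    ghostPow G n (a ≫ f) := by
  induction n generalizing Z with
  | zero => trivial
  | succ n ih =>
    obtain ⟨⟨M, g, h, rfl, hg, hh⟩⟩ := hf
    exact ⟨⟨M, a ≫ g, h, Category.assoc _ _ _, ih hg, hh⟩⟩

lemma ghostPow_succ_le_ghosts (G : C) (n : ℕ) : ghostPow G (n + 1) ≤ ghosts G := by
  rintro X Y _ ⟨⟨M, g, h, rfl, -, hh⟩⟩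
  exact ghosts_precomp g hh

lemma ghostPow_add_le_comp (G : C) (m n : ℕ) :
    ghostPow G (m + n) ≤ (ghostPow G m).comp (ghostPow G n) := by
  induction n with
  | zero => exact fun X Y f hf => ⟨⟨Y, f, 𝟙 Y, Category.comp_id f, hf, trivial⟩⟩
  | succ n ih =>
    rintro X Y _ ⟨⟨M, g, h, rfl, hg, hh⟩⟩
    obtain ⟨⟨N, g₁, g₂, rfl, hg₁, hg₂⟩⟩ := ih g hg
    exact ⟨⟨N, g₁, g₂ ≫ h, (Category.assoc _ _ _).symm, hg₁, ⟨⟨M, g₂, h, rfl, hg₂, hh⟩⟩⟩⟩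

lemma ghostPow_mul_le {K W : C} {l : ℕ} (h : ghostPow K l ≤ ghosts W) (n : ℕ) :
    ghostPow K (l * n) ≤ ghostPow W n := by
  induction n with
  | zero => exact fun _ _ _ _ => trivial
  | succ n ih =>
    intro X Y f hf
    obtain ⟨⟨M, g₁, g₂, rfl, hg₁, hg₂⟩⟩ := ghostPow_add_le_comp K (l * n) l f hf
    exact ⟨⟨M, g₁, g₂, rfl, ih g₁ hg₁, h g₂ hg₂⟩⟩

lemma ghosts_le_ghosts_of_mem_bigOne {X : C} (hX : X ∈ bigOne G) : ghosts G ≤ ghosts X := by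
  intro Y Z φ hφ
  refine hX {A | ∀ (n : ℤ) (a : A⟦n⟧ ⟶ Y), a ≫ φ = 0} ⟨hφ, ?_, ?_, ?_⟩
  · intro A hA m n a
    exact zero_of_epi_comp (shiftAdd A m n).hom (by rw [← Category.assoc, hA])
  · intro ι f _ hf n a
    refine (isColimitOfPreserves (shiftFunctor C n) (coproductIsCoproduct f)).hom_ext fun i => ?_
    rw [← Category.assoc, comp_zero]
    exact hf i.as n _
  · rintro A B hB ⟨i, p, hip⟩ n a
    calc a ≫ φ = i⟦n⟧' ≫ (p⟦n⟧' ≫ a) ≫ φ := by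
          rw [Category.assoc, ← Functor.map_comp_assoc, hip, CategoryTheory.Functor.map_id,
            Category.id_comp]
      _ = 0 := by rw [hB, comp_zero]

lemma comp_eq_zero_of_mem_bigOne {X Y Z : C} (hX : X ∈ bigOne G) (a : X ⟶ Y) {φ : Y ⟶ Z}
    (hφ : ghosts G φ) : a ≫ φ = 0 :=
  eq_zero_of_ghosts_self (ghosts_precomp a (ghosts_le_ghosts_of_mem_bigOne hX φ hφ))

end Ghosts

section Levels

variable [HasZeroObject C] [Preadditive C] [HasShift C ℤ]
  [∀ n : ℤ, (shiftFunctor C n).Additive] [Pretriangulated C] {G : C}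

lemma mem_bigLevel_of_isRetract {n : ℕ} {X Y : C} (hY : Y ∈ bigLevel G n) (h : IsRetract X Y) :
    X ∈ bigLevel G n := by
  match n with
  | 0 =>
    obtain ⟨i, p, hip⟩ := h
    exact (IsZero.iff_id_eq_zero X).2 (by rw [← hip, IsZero.eq_of_tgt hY i 0, zero_comp])
  | 1 => exact mem_bigOne_of_isRetract hY h
  | n + 2 =>
    obtain ⟨E, A, B, f, g, k, hT, hA, hB, hYE⟩ := hY
    exact ⟨E, A, B, f, g, k, hT, hA, hB, h.trans hYE⟩

lemma shift_mem_bigLevel {n : ℕ} {X : C} (hX : X ∈ bigLevel G n) (m : ℤ) :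
    (X⟦m⟧ : C) ∈ bigLevel G n := by
  induction n using Nat.twoStepInduction generalizing X with
  | zero => exact (shiftFunctor C m).map_isZero hX
  | one => exact shift_mem_bigOne hX m
  | more n _ ih =>
    obtain ⟨E, A, B, f, g, k, hT, hA, hB, hXE⟩ := hX
    exact ⟨_, _, _, _, _, _, Triangle.shift_distinguished _ hT m, ih hA, shift_mem_bigOne hB m,
      hXE.map (shiftFunctor C m)⟩

lemma eq_zero_of_mem_bigLevel {n : ℕ} {X Y : C} (hX : X ∈ bigLevel G n) {f : X ⟶ Y}
    (hf : ghostPow G n f) : f = 0 := by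
  induction n using Nat.twoStepInduction generalizing X Y with
  | zero => exact IsZero.eq_of_src hX f 0
  | one =>
    obtain ⟨⟨M, g, h, rfl, -, hh⟩⟩ := hf
    exact comp_eq_zero_of_mem_bigOne hX g hh
  | more n _ ih =>
    obtain ⟨E, A, B, a, b, c, hT, hA, hB, i, p, hip⟩ := hX
    obtain ⟨⟨M, g, h, rfl, hg, hh⟩⟩ := hf
    obtain ⟨g', hg'⟩ : ∃ g' : B ⟶ M, p ≫ g = b ≫ g' :=
      Triangle.yoneda_exact₂ _ hT (p ≫ g) (ih hA (ghostPow_precomp a (ghostPow_precomp p hg)))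
    calc g ≫ h = i ≫ (p ≫ g) ≫ h := by
          rw [Category.assoc, reassoc_of% hip]
      _ = i ≫ b ≫ g' ≫ h := by rw [hg', Category.assoc]
      _ = 0 := by rw [comp_eq_zero_of_mem_bigOne hB g' hh, comp_zero, comp_zero]

lemma ghostPow_le_ghosts_of_mem_bigLevel {n : ℕ} {X : C} (hX : X ∈ bigLevel G n) :
    ghostPow G n ≤ ghosts X :=
  fun _ _ _ hf m a => eq_zero_of_mem_bigLevel (shift_mem_bigLevel hX m) (ghostPow_precomp a hf)

end Levels

section GhostApproximations

variable [HasZeroObject C] [Preadditive C] [HasShift C ℤ]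
  [∀ n : ℤ, (shiftFunctor C n).Additive] [Pretriangulated C] {G : C}

/-- With the octahedral axiom, `E` could be chosen to be a weak pushout of `k` and `h`, so that
`w = 0`. -/
lemma exists_extension_factorization {H P A F X : C} {k : H ⟶ P} {s : P ⟶ A}
    {δ : A ⟶ H⟦(1 : ℤ)⟧} (hT : Triangle.mk k s δ ∈ distTriang C) (x : P ⟶ X) (h : H ⟶ F)
    (i : F ⟶ X) (comm : k ≫ x = h ≫ i) :
    ∃ (E : C) (q : F ⟶ E) (r : E ⟶ A) (ε : A ⟶ F⟦(1 : ℤ)⟧), Triangle.mk q r ε ∈ distTriang C ∧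
      ∃ (e : P ⟶ E) (y : E ⟶ X) (w : A ⟶ X), q ≫ y = i ∧ x = e ≫ y + s ≫ w := by
  obtain ⟨E, q, r, hE⟩ := distinguished_cocone_triangle₂ (δ ≫ h⟦(1 : ℤ)⟧')
  have hδk : δ ≫ k⟦(1 : ℤ)⟧' = 0 := comp_distTriang_mor_zero₃₁ _ hT
  have hδi : (δ ≫ h⟦(1 : ℤ)⟧') ≫ i⟦(1 : ℤ)⟧' = 0 := by
    rw [Category.assoc, ← Functor.map_comp, ← comm, Functor.map_comp, reassoc_of% hδk, zero_comp]
  obtain ⟨e, he, -⟩ : ∃ e : P ⟶ E, k ≫ e = h ≫ q ∧ s ≫ 𝟙 A = e ≫ r :=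
    complete_distinguished_triangle_morphism₂ _ _ hT hE h (𝟙 A) (Category.id_comp _).symm
  obtain ⟨y, hy, -⟩ : ∃ y : E ⟶ X, q ≫ y = i ≫ 𝟙 X ∧ r ≫ 0 = y ≫ _ :=
    complete_distinguished_triangle_morphism₂ _ _ hE (contractible_distinguished X) i 0
      (hδi.trans zero_comp.symm)
  rw [Category.comp_id] at hy
  obtain ⟨w, hw⟩ : ∃ w : A ⟶ X, x - e ≫ y = s ≫ w :=
    Triangle.yoneda_exact₂ _ hT (x - e ≫ y) (by
      change k ≫ (x - e ≫ y) = 0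
      rw [Preadditive.comp_sub, reassoc_of% he, hy, comm, sub_self])
  exact ⟨E, q, r, _, hE, e, y, w, hy, by rw [← hw, add_sub_cancel]⟩

/-- `X` has a ghost approximation of level `n`: some `n`-fold composite `g` of ghosts out of `X` has
a weak kernel `i` with source in `⟨G⟩̄ₙ`. That `i ≫ g = 0` is not required, as it is automatic. -/
def HasGhostApproximation (G : C) (n : ℕ) (X : C) : Prop :=
  ∃ (F Y : C) (i : F ⟶ X) (g : X ⟶ Y), F ∈ bigLevel G n ∧ ghostPow G n g ∧
    ∀ ⦃W : C⦄ (t : W ⟶ X), t ≫ g = 0 → ∃ s : W ⟶ F, t = s ≫ i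

lemma HasGhostApproximation.zero (G X : C) : HasGhostApproximation G 0 X :=
  ⟨_, X, 0, 𝟙 X, isZero_zero C, trivial, fun W t ht => ⟨0, by
    rw [zero_comp, ← ht, Category.comp_id]⟩⟩

variable [HasCoproducts.{v} C]

lemma exists_triangle_bigOne_ghosts (G X : C) :
    ∃ (A Y : C) (a : A ⟶ X) (g : X ⟶ Y) (δ : Y ⟶ A⟦(1 : ℤ)⟧),
      Triangle.mk a g δ ∈ distTriang C ∧ A ∈ bigOne G ∧ ghosts G g := by
  let f : (Σ n : ℤ, (G⟦n⟧ ⟶ X)) → C := fun p => G⟦p.1⟧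
  let a : ∐ f ⟶ X := Sigma.desc fun p => p.2
  obtain ⟨Y, g, δ, hT⟩ := distinguished_cocone_triangle a
  have hag : a ≫ g = 0 := comp_distTriang_mor_zero₁₂ _ hT
  refine ⟨∐ f, Y, a, g, δ, hT,
    coproduct_mem_bigOne fun p => shift_mem_bigOne (self_mem_bigOne G) p.1, fun n b => ?_⟩
  have hb : Sigma.ι f ⟨n, b⟩ ≫ a = b := Sigma.ι_desc _ _
  rw [← hb, Category.assoc, hag, comp_zero]

lemma HasGhostApproximation.one (G X : C) : HasGhostApproximation G 1 X := by
  obtain ⟨A, Y, a, g, δ, hT, hA, hg⟩ := exists_triangle_bigOne_ghosts G X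
  exact ⟨A, Y, a, g, hA, ⟨⟨X, 𝟙 X, g, Category.id_comp g, trivial, hg⟩⟩,
    fun _ => Triangle.coyoneda_exact₂ _ hT⟩

lemma HasGhostApproximation.succ {n : ℕ} {X : C} (hX : HasGhostApproximation G (n + 1) X) :
    HasGhostApproximation G (n + 2) X := by
  obtain ⟨F, Y, i, g, hF, hg, lift_i⟩ := hX
  obtain ⟨A, Z, a, g', δ, hA, hAmem, hg'⟩ := exists_triangle_bigOne_ghosts G Y
  obtain ⟨P, x, η, hP⟩ := distinguished_cocone_triangle₁ (g ≫ g')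
  have hxgg' : x ≫ g ≫ g' = 0 := comp_distTriang_mor_zero₁₂ _ hP
  obtain ⟨s, hs⟩ : ∃ s : P ⟶ A, x ≫ g = s ≫ a :=
    Triangle.coyoneda_exact₂ _ hA (x ≫ g) ((Category.assoc _ _ _).trans hxgg')
  obtain ⟨H, k, δ', hH⟩ := distinguished_cocone_triangle₁ s
  have hks : k ≫ s = 0 := comp_distTriang_mor_zero₁₂ _ hH
  obtain ⟨h, hh⟩ := lift_i (k ≫ x) (by rw [Category.assoc, hs, reassoc_of% hks, zero_comp])
  obtain ⟨E, q, r, ε, hE, e, y, w, hqy, hx⟩ := exists_extension_factorization hH x h i hh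
  -- The ghost `g` annihilates `w`, so the error term `s ≫ w` factors through `F` as well.
  obtain ⟨w', hw'⟩ :=
    lift_i w (comp_eq_zero_of_mem_bigOne hAmem w (ghostPow_succ_le_ghosts G n g hg))
  have hxy : x = (e + s ≫ w' ≫ q) ≫ y := by
    rw [Preadditive.add_comp, Category.assoc, Category.assoc, hqy, ← hw', ← hx]
  refine ⟨E, Z, y, g ≫ g', ⟨E, F, A, q, r, ε, hE, hF, hAmem, .refl E⟩,
    ⟨⟨Y, g, g', rfl, hg, hg'⟩⟩, fun W t ht => ?_⟩
  obtain ⟨p, hp⟩ : ∃ p : W ⟶ P, t = p ≫ x := Triangle.coyoneda_exact₂ _ hP t ht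
  exact ⟨p ≫ (e + s ≫ w' ≫ q), by rw [Category.assoc, ← hxy, hp]⟩

lemma hasGhostApproximation (G : C) (n : ℕ) (X : C) : HasGhostApproximation G n X := by
  induction n using Nat.twoStepInduction with
  | zero => exact .zero G X
  | one => exact .one G X
  | more n _ ih => exact ih.succ

theorem mem_bigLevel_iff_forall_ghostPow_eq_zero {n : ℕ} {X : C} :
    X ∈ bigLevel G n ↔ ∀ ⦃Y : C⦄ (f : X ⟶ Y), ghostPow G n f → f = 0 := by
  refine ⟨fun hX Y f => eq_zero_of_mem_bigLevel hX, fun h => ?_⟩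
  obtain ⟨F, Y, i, g, hF, hg, lift_i⟩ := hasGhostApproximation G n X
  obtain ⟨s, hs⟩ := lift_i (𝟙 X) ((Category.id_comp g).trans (h g hg))
  exact mem_bigLevel_of_isRetract hF ⟨s, i, hs.symm⟩

theorem bigLevel_subset_bigLevel_mul {K W : C} {l : ℕ} (hW : W ∈ bigLevel K l) (n : ℕ) :
    bigLevel W n ⊆ bigLevel K (l * n) := fun _ hX =>
  mem_bigLevel_iff_forall_ghostPow_eq_zero.2 fun _ f hf =>
    eq_zero_of_mem_bigLevel hX (ghostPow_mul_le (ghostPow_le_ghosts_of_mem_bigLevel hW) n f hf)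

end GhostApproximations

section Functors

variable [HasZeroObject C] [Preadditive C] [HasShift C ℤ]
  [∀ n : ℤ, (shiftFunctor C n).Additive] [Pretriangulated C]
  {D : Type u₂} [Category.{v} D] [HasZeroObject D] [Preadditive D] [HasShift D ℤ]
  [∀ n : ℤ, (shiftFunctor D n).Additive] [Pretriangulated D]
  (Φ : C ⥤ D) [Φ.CommShift ℤ] [∀ J : Type v, PreservesColimitsOfShape (Discrete J) Φ]

lemma map_mem_bigLevel [Φ.IsTriangulated] {G : C} {n : ℕ} {X : C} (hX : X ∈ bigLevel G n) :
    Φ.obj X ∈ bigLevel (Φ.obj G) n := by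
  induction n using Nat.twoStepInduction generalizing X with
  | zero => exact Φ.map_isZero hX
  | one => exact map_mem_bigOne Φ hX
  | more n _ ih =>
    obtain ⟨E, A, B, f, g, k, hT, hA, hB, hXE⟩ := hX
    exact ⟨_, _, _, _, _, _, Φ.map_distinguished _ hT, ih hA, map_mem_bigOne Φ hB, hXE.map Φ⟩

end Functors

section Tensor

variable [HasZeroObject C] [Preadditive C] [HasShift C ℤ]
  [∀ n : ℤ, (shiftFunctor C n).Additive] [Pretriangulated C] [HasCoproducts.{v} C]
  [MonoidalCategory C]
  [∀ X : C, (tensorRight X).CommShift ℤ] [∀ X : C, (tensorRight X).IsTriangulated]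
  [∀ (X : C) (J : Type v), PreservesColimitsOfShape (Discrete J) (tensorRight X)]

theorem bigLevel_mul_eq_univ_of_unit_mem {K : C} {l n : ℕ} (hK : ∀ X : C, K ⊗ X ∈ bigLevel K l)
    (hn : 𝟙_ C ∈ bigLevel K n) : bigLevel K (l * n) = Set.univ := by
  refine Set.eq_univ_of_forall fun X => ?_
  have hX : 𝟙_ C ⊗ X ∈ bigLevel (K ⊗ X) n := map_mem_bigLevel (tensorRight X) hn
  exact mem_bigLevel_of_isRetract (bigLevel_subset_bigLevel_mul (hK X) n hX) (.of_iso (λ_ X).symm)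

theorem statement5_general {D : Type u₂} [Category.{v} D] [HasZeroObject D] [Preadditive D]
    [HasShift D ℤ] [∀ n : ℤ, (shiftFunctor D n).Additive] [Pretriangulated D]
    (Φ : D ⥤ C) [Φ.CommShift ℤ] [Φ.IsTriangulated]
    [∀ J : Type v, PreservesColimitsOfShape (Discrete J) Φ]
    (G : D) (hΦ : ∀ X : C, Φ.essImage (Φ.obj G ⊗ X))
    (hG : ∃ l : ℕ, bigLevel G l = (Set.univ : Set D)) :
    (∃ m : ℕ, bigLevel (Φ.obj G) m = (Set.univ : Set C)) ↔
      (∃ n : ℕ, 𝟙_ C ∈ bigLevel (Φ.obj G) n) := by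
  obtain ⟨l, hl⟩ := hG
  refine ⟨fun ⟨m, hm⟩ => ⟨m, hm ▸ Set.mem_univ _⟩, fun ⟨n, hn⟩ => ⟨l * n, ?_⟩⟩
  refine bigLevel_mul_eq_univ_of_unit_mem (fun X => ?_) hn
  obtain ⟨B, ⟨e⟩⟩ := hΦ X
  have hB : B ∈ bigLevel G l := hl ▸ Set.mem_univ B
  exact mem_bigLevel_of_isRetract (map_mem_bigLevel Φ hB) (.of_iso e.symm)

end Tensor

section Adjunction

/- The tensor-triangulated adjunction setting: `S` (𝒮) and `T` (𝒯) are triangulated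
categories admitting all small coproducts, each equipped with a symmetric monoidal
structure whose tensoring endofunctors are exact and preserve small coproducts;
`F : S ⥤ T` (the functor `f^*`) is an exact strong monoidal functor preserving small
coproducts, with a right adjoint `Fst : T ⥤ S` (the functor `f_*`) which is exact and
preserves small coproducts, satisfying the projection formula
`A ⊗ f_*(B) ≅ f_*(B ⊗ f^*A)`. -/

variable {S : Type u} [Category.{v} S] {T : Type u₂} [Category.{v} T]
  [HasZeroObject S] [Preadditive S] [HasShift S ℤ]
  [∀ n : ℤ, (shiftFunctor S n).Additive] [Pretriangulated S] [HasCoproducts.{v} S]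
  [HasZeroObject T] [Preadditive T] [HasShift T ℤ]
  [∀ n : ℤ, (shiftFunctor T n).Additive] [Pretriangulated T] [HasCoproducts.{v} T]
  [MonoidalCategory S] [SymmetricCategory S] [MonoidalCategory T] [SymmetricCategory T]
  [∀ X : S, (tensorRight X).CommShift ℤ] [∀ X : S, (tensorRight X).IsTriangulated]
  [∀ (X : S) (J : Type v), PreservesColimitsOfShape (Discrete J) (tensorRight X)]
  [∀ X : T, (tensorRight X).CommShift ℤ] [∀ X : T, (tensorRight X).IsTriangulated]
  [∀ (X : T) (J : Type v), PreservesColimitsOfShape (Discrete J) (tensorRight X)]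
  (F : S ⥤ T) [F.Monoidal] [F.CommShift ℤ] [F.IsTriangulated]
  [∀ J : Type v, PreservesColimitsOfShape (Discrete J) F]
  (Fst : T ⥤ S) [Fst.CommShift ℤ] [Fst.IsTriangulated]
  [∀ J : Type v, PreservesColimitsOfShape (Discrete J) Fst]

/--
in the tensor-triangulated adjunction setting, if `G` is a strong
⊕-generator for 𝒯, then `f_* G` is a strong ⊕-generator for 𝒮 if and only if the unit
`1_𝒮` belongs to `⟨f_* G⟩̄ₙ` for some `n ≥ 0`.
-/
theorem statement5 (adj : F ⊣ Fst)
    (proj : ∀ (A : S) (B : T), Nonempty ((A ⊗ Fst.obj B) ≅ Fst.obj (B ⊗ F.obj A)))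
    (G : T) (hG : ∃ l : ℕ, bigLevel G l = (Set.univ : Set T)) :
    (∃ m : ℕ, bigLevel (Fst.obj G) m = (Set.univ : Set S)) ↔
      (∃ n : ℕ, (𝟙_ S) ∈ bigLevel (Fst.obj G) n) :=
  statement5_general Fst G
    (fun X => ⟨G ⊗ F.obj X, (proj X G).map fun e => (β_ (Fst.obj G) X ≪≫ e).symm⟩) hG

end Adjunction

end Stmt
end

section
/- Let R be a commutative Noetherian ring of finite Krull dimension with minimal primes 𝔭_1, …, 𝔭_n. For each i, let G_i be an object of D(Mod (R/𝔭_i)) with bounded finitely generated homology such that every object of D(Mod (R/𝔭_i)) with bounded finitely generated homology lies in the smallest thick subcategory of D(Mod (R/𝔭_i)) containing G_i. Then every object of D(Mod R) with bounded finitely generated homology lies in the smallest thick subcategory of D(Mod R) containing the direct sum ⊕_{i=1}^n G_i, where each G_i is regarded as a complex of R-modules via restriction of scalars along R → R/𝔭_i. (This is the affine case of the paper's Proposition: a direct sum of pushforwards of classical generators on the maximal irreducible components is a classical generator.) -/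
/-!
In `D(Mod R)`, truncation builds an object with bounded finitely generated homology from shifts of
its homology modules, and these have finite filtrations with subquotients `R ⧸ q`, `q` prime. So a
thick subcategory containing every `R ⧸ q` contains all such objects.

Let `P` be the thick closure of `⨁ᵢ G i`; it contains each restricted `G i`, as a direct summand.
Each prime `q` contains some `p i`, so that `R ⧸ q` is the restriction of a finitely generated
`R ⧸ p i`-module. Restriction of scalars is triangulated, so the preimage of `P` in
`D(Mod (R ⧸ p i))` is thick; it contains `G i`, hence every finitely generated `R ⧸ p i`-module.
-/

open CategoryTheory Limits Pretriangulated

universe v u v₂ u₂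

namespace Stmt

variable {C : Type u} [Category.{v} C]

section Thick

variable [HasZeroObject C] [Preadditive C] [HasShift C ℤ]
  [∀ n : ℤ, (shiftFunctor C n).Additive] [Pretriangulated C]

/-- A collection of objects of a pretriangulated category is a thick (triangulated)
subcategory when it contains the zero objects, and is closed under shifts, cones of
morphisms between its objects (two-out-of-three for distinguished triangles), and
direct summands (retracts). -/
def IsThickSubcat (S : Set C) : Prop :=
  (∀ X : C, IsZero X → X ∈ S) ∧
  (∀ X ∈ S, ∀ n : ℤ, (X⟦n⟧ : C) ∈ S) ∧
  (∀ T : Triangle C, (T ∈ distTriang C) → T.obj₁ ∈ S → T.obj₂ ∈ S → T.obj₃ ∈ S) ∧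
  (∀ X Y : C, Y ∈ S → IsRetract X Y → X ∈ S)

/-- The smallest thick subcategory (as a collection of objects) containing `A`. -/
def thickClosure (A : Set C) : Set C := ⋂₀ {S : Set C | A ⊆ S ∧ IsThickSubcat S}

end Thick

/-- An object of the derived category of `A`-modules has bounded finitely generated
homology if its homology modules are all finitely generated and vanish in all but
finitely many degrees. -/
def HasBoundedFGHomology (A : Type u) [CommRing A] [HasDerivedCategory (ModuleCat.{u} A)]
    (X : DerivedCategory (ModuleCat.{u} A)) : Prop :=
  (∀ m : ℤ, Module.Finite A ((DerivedCategory.homologyFunctor (ModuleCat.{u} A) m).obj X)) ∧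
  {m : ℤ | ¬ IsZero ((DerivedCategory.homologyFunctor (ModuleCat.{u} A) m).obj X)}.Finite

instance isStableUnderRetracts_inverseImage {D : Type u₂} [Category.{v₂} D]
    (P : ObjectProperty D) [P.IsStableUnderRetracts] (F : C ⥤ D) :
    (P.inverseImage F).IsStableUnderRetracts :=
  ⟨fun r hY => P.prop_of_retract (r.map F) hY⟩

section Pretriangulated

variable [HasZeroObject C] [Preadditive C] [HasShift C ℤ]
  [∀ n : ℤ, (shiftFunctor C n).Additive] [Pretriangulated C]

lemma isThickSubcat_setOf_iff (P : ObjectProperty C) :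
    IsThickSubcat {X | P X} ↔ P.IsTriangulated ∧ P.IsStableUnderRetracts := by
  constructor
  · rintro ⟨zero, shift, cone, retract⟩
    have retracts : P.IsStableUnderRetracts := ⟨fun r hY => retract _ _ hY ⟨r.i, r.r, r.retract⟩⟩
    have : P.IsStableUnderShift ℤ := ⟨fun n => ⟨fun X hX => shift X hX n⟩⟩
    have : P.IsTriangulatedClosed₃ := .mk' cone
    exact ⟨{ exists_zero := ⟨_, isZero_zero C, zero _ (isZero_zero C)⟩
             toIsTriangulatedClosed₂ := .of_isTriangulatedClosed₃ }, retracts⟩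
  · rintro ⟨_, _⟩
    exact ⟨fun X hX => P.prop_of_isZero hX, fun X hX n => P.le_shift n X hX,
      P.ext_of_isTriangulatedClosed₃, fun X Y hY ⟨i, r, hir⟩ => P.prop_of_retract ⟨i, r, hir⟩ hY⟩

lemma thickClosure_setOf [IsTriangulated C] (P : ObjectProperty C) [P.Nonempty] :
    thickClosure {X | P X} = {X | P.triangEnvelope X} := by
  apply Set.Subset.antisymm
  · exact Set.sInter_subset_of_mem
      ⟨P.le_triangEnvelope, (isThickSubcat_setOf_iff _).2 ⟨inferInstance, inferInstance⟩⟩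
  · rintro X hX S ⟨hPS, hS⟩
    let Q : ObjectProperty C := (· ∈ S)
    obtain ⟨_, _⟩ := (isThickSubcat_setOf_iff Q).1 hS
    exact (P.triangEnvelope_le_iff (Q := Q)).2 hPS X hX

lemma mem_thickClosure_singleton_iff [IsTriangulated C] {X Y : C} :
    X ∈ thickClosure {Y} ↔ (ObjectProperty.singleton Y).triangEnvelope X := by
  have : ({Y} : Set C) = {Z | ObjectProperty.singleton Y Z} := by
    ext Z
    simp [eq_comm]
  rw [this, thickClosure_setOf]
  rfl

lemma prop_obj_of_mem_thickClosure_singleton {D : Type u₂} [Category.{v₂} D] [HasZeroObject D]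
    [Preadditive D] [HasShift D ℤ] [∀ n : ℤ, (shiftFunctor D n).Additive] [Pretriangulated D]
    (F : C ⥤ D) [F.CommShift ℤ] [F.IsTriangulated]
    (P : ObjectProperty D) [P.IsTriangulated] [P.IsStableUnderRetracts]
    {X Y : C} (hX : X ∈ thickClosure {Y}) (hY : P (F.obj Y)) : P (F.obj X) :=
  hX {Z | P.inverseImage F Z} ⟨Set.singleton_subset_iff.2 hY,
    (isThickSubcat_setOf_iff _).2 ⟨inferInstance, inferInstance⟩⟩

end Pretriangulated

section DerivedCategory

open DerivedCategory DerivedCategory.TStructure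

variable [Abelian C] [HasDerivedCategory C]

lemma isIso_homologyMap_truncLEι (E : DerivedCategory C) {n i : ℤ} (hi : i ≤ n) :
    IsIso ((homologyFunctor C i).map ((t.truncLEι n).app E)) := by
  have hT := t.triangleLEGT_distinguished n E
  have hzero (j : ℤ) (hj : j ≤ n) : IsZero ((homologyFunctor C j).obj ((t.truncGT n).obj E)) :=
    isZero_of_isGE _ (n + 1) j (by lia)
  have : Mono ((homologyFunctor C i).map ((t.truncLEι n).app E)) :=
    (HomologySequence.mono_homologyMap_mor₁_iff _ hT (i - 1) i).2
      ((hzero (i - 1) (by lia)).eq_of_src _ _)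
  have : Epi ((homologyFunctor C i).map ((t.truncLEι n).app E)) :=
    (HomologySequence.epi_homologyMap_mor₁_iff _ hT i).2 ((hzero i hi).eq_of_tgt _ _)
  exact isIso_of_mono_of_epi _

lemma isIso_homologyMap_truncGTπ (E : DerivedCategory C) {n i : ℤ} (hi : n < i) :
    IsIso ((homologyFunctor C i).map ((t.truncGTπ n).app E)) := by
  have hT := t.triangleLEGT_distinguished n E
  have hzero (j : ℤ) (hj : n < j) : IsZero ((homologyFunctor C j).obj ((t.truncLE n).obj E)) :=
    isZero_of_isLE _ n j hj
  have : Mono ((homologyFunctor C i).map ((t.truncGTπ n).app E)) :=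
    (HomologySequence.mono_homologyMap_mor₂_iff _ hT i).2 ((hzero i hi).eq_of_src _ _)
  have : Epi ((homologyFunctor C i).map ((t.truncGTπ n).app E)) :=
    (HomologySequence.epi_homologyMap_mor₂_iff _ hT i (i + 1)).2
      ((hzero (i + 1) (by lia)).eq_of_tgt _ _)
  exact isIso_of_mono_of_epi _

lemma nonempty_iso_singleFunctor_homology (E : DerivedCategory C) (n : ℤ)
    [E.IsGE n] [E.IsLE n] :
    Nonempty (E ≅ (singleFunctor C n).obj ((homologyFunctor C n).obj E)) := by
  obtain ⟨M, ⟨e⟩⟩ := exists_iso_singleFunctor_obj_of_isGE_of_isLE E n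
  have eM : (homologyFunctor C n).obj E ≅ M :=
    (homologyFunctor C n).mapIso e ≪≫ (singleFunctorCompHomologyFunctorIso C n).app M
  exact ⟨e ≪≫ (singleFunctor C n).mapIso eM.symm⟩

lemma bounded_iff_finite_homology (E : DerivedCategory C) :
    t.bounded E ↔ {i : ℤ | ¬ IsZero ((homologyFunctor C i).obj E)}.Finite := by
  constructor
  · rintro ⟨⟨a, _⟩, ⟨b, _⟩⟩
    refine (Set.finite_Icc a b).subset fun i hi => ⟨?_, ?_⟩ <;> by_contra! h
    · exact hi (isZero_of_isGE E a i h)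
    · exact hi (isZero_of_isLE E b i h)
  · intro h
    obtain ⟨a, ha⟩ := h.bddBelow
    obtain ⟨b, hb⟩ := h.bddAbove
    refine ⟨⟨a, (isGE_iff E a).2 fun i hi => ?_⟩, ⟨b, (isLE_iff E b).2 fun i hi => ?_⟩⟩ <;>
      by_contra hE
    · exact hi.not_ge (ha hE)
    · exact hi.not_ge (hb hE)

variable (P : ObjectProperty (DerivedCategory C)) [P.IsClosedUnderIsomorphisms]

lemma prop_singleFunctor_obj [P.IsStableUnderShift ℤ] {M : C}
    (hM : P ((singleFunctor C 0).obj M)) (n : ℤ) : P ((singleFunctor C n).obj M) :=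
  P.prop_of_iso (((singleFunctors C).shiftIso (-n) n 0 (by lia)).app M) (P.le_shift (-n) _ hM)

lemma prop_of_bounded_of_prop_homology [P.IsTriangulated] {E : DerivedCategory C}
    (hE : t.bounded E)
    (hH : ∀ i, P ((singleFunctor C 0).obj ((homologyFunctor C i).obj E))) : P E := by
  obtain ⟨⟨a, ha⟩, ⟨b, hb⟩⟩ := hE
  obtain hlt | hab := lt_or_ge b a
  · exact P.prop_of_isZero (t.isZero E b a hlt)
  · induction b, hab using Int.leInduction generalizing E with
    | base =>
      obtain ⟨e⟩ := nonempty_iso_singleFunctor_homology E a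
      exact P.prop_of_iso e.symm (prop_singleFunctor_obj P (hH a) a)
    | succ b _ ih =>
      have hX : P ((t.truncLE b).obj E) := by
        refine ih (fun i => ?_) inferInstance inferInstance
        obtain hi | hi := le_or_gt i b
        · have := isIso_homologyMap_truncLEι E hi
          exact P.prop_of_iso ((singleFunctor C 0).mapIso
            (asIso ((homologyFunctor C i).map ((t.truncLEι b).app E))).symm) (hH i)
        · exact P.prop_of_isZero (Functor.map_isZero _ (isZero_of_isLE _ b i hi))
      have hY : P ((t.truncGT b).obj E) := by
        have : ((t.truncGT b).obj E).IsGE (b + 1) := t.isGE_truncGT_obj _ _ _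
        have : ((t.truncGT b).obj E).IsLE (b + 1) := inferInstance
        obtain ⟨e⟩ := nonempty_iso_singleFunctor_homology ((t.truncGT b).obj E) (b + 1)
        have := isIso_homologyMap_truncGTπ E (lt_add_one b)
        exact P.prop_of_iso ((singleFunctor C (b + 1)).mapIso
          (asIso ((homologyFunctor C (b + 1)).map ((t.truncGTπ b).app E))) ≪≫ e.symm)
          (prop_singleFunctor_obj P (hH (b + 1)) (b + 1))
      exact P.ext_of_isTriangulatedClosed₂ _ (t.triangleLEGT_distinguished b E) hX hY

end DerivedCategory

section Modules

open DerivedCategory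

variable {A : Type u} [CommRing A]

lemma exists_finite_restrictScalars_iso {I : Ideal A} (M : ModuleCat.{u} A) [Module.Finite A M]
    (hM : Module.IsTorsionBySet A M I) :
    ∃ N : ModuleCat.{u} (A ⧸ I), Module.Finite (A ⧸ I) N ∧
      Nonempty ((ModuleCat.restrictScalars.{u} (Ideal.Quotient.mk I)).obj N ≅ M) := by
  let _ : Module (A ⧸ I) M := hM.module
  have : IsScalarTower A (A ⧸ I) M := hM.isScalarTower
  exact ⟨ModuleCat.of (A ⧸ I) M, Module.Finite.of_restrictScalars_finite A (A ⧸ I) M,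
    ⟨LinearEquiv.toModuleIso { AddEquiv.refl M with map_smul' := fun _ _ => rfl }⟩⟩

variable [HasDerivedCategory (ModuleCat.{u} A)]

lemma hasBoundedFGHomology_singleFunctor_obj (M : ModuleCat.{u} A) [Module.Finite A M] :
    HasBoundedFGHomology A ((singleFunctor (ModuleCat.{u} A) 0).obj M) := by
  refine ⟨fun m => ?_, (bounded_iff_finite_homology _).1
    ⟨⟨0, inferInstance⟩, ⟨0, inferInstance⟩⟩⟩
  obtain rfl | hm := eq_or_ne m 0
  · have e : M ≅ (homologyFunctor _ 0).obj ((singleFunctor (ModuleCat A) 0).obj M) :=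
      ((singleFunctorCompHomologyFunctorIso _ 0).app M).symm
    exact .equiv e.toLinearEquiv
  · have hzero : IsZero ((homologyFunctor _ m).obj ((singleFunctor (ModuleCat A) 0).obj M)) := by
      obtain hm | hm := hm.lt_or_gt
      · exact isZero_of_isGE _ 0 m hm
      · exact isZero_of_isLE _ 0 m hm
    have := ModuleCat.subsingleton_of_isZero hzero
    infer_instance

variable [IsNoetherianRing A] (P : ObjectProperty (DerivedCategory (ModuleCat.{u} A)))
  [P.IsClosedUnderIsomorphisms]

lemma prop_singleFunctor_obj_of_finite [P.ContainsZero] [P.IsTriangulatedClosed₂]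
    (hP : ∀ q : Ideal A, q.IsPrime → P ((singleFunctor _ 0).obj (ModuleCat.of A (A ⧸ q))))
    (M : Type u) [AddCommGroup M] [Module A M] [hM : Module.Finite A M] :
    P ((singleFunctor _ 0).obj (ModuleCat.of A M)) := by
  induction hM using IsNoetherianRing.induction_on_isQuotientEquivQuotientPrime A with
  | subsingleton N =>
    exact P.prop_of_isZero (Functor.map_isZero _ (ModuleCat.isZero_of_subsingleton _))
  | quotient N q e =>
    exact P.prop_of_iso ((singleFunctor _ 0).mapIso e.symm.toModuleIso) (hP q.1 q.2)
  | exact N₁ N₂ N₃ f g hf hg hfg h₁ h₃ =>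
    have hS : (ShortComplex.mk (ModuleCat.ofHom f) (ModuleCat.ofHom g)
        (by ext x; exact hfg.apply_apply_eq_zero x)).ShortExact :=
      { exact := (ShortComplex.ShortExact.moduleCat_exact_iff_function_exact _).2 hfg
        mono_f := (ModuleCat.mono_iff_injective _).2 hf
        epi_g := (ModuleCat.epi_iff_surjective _).2 hg }
    exact P.ext_of_isTriangulatedClosed₂ _ hS.singleTriangle_distinguished h₁ h₃

lemma prop_of_hasBoundedFGHomology [P.IsTriangulated]
    (hP : ∀ q : Ideal A, q.IsPrime → P ((singleFunctor _ 0).obj (ModuleCat.of A (A ⧸ q))))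
    {E : DerivedCategory (ModuleCat.{u} A)} (hE : HasBoundedFGHomology A E) : P E :=
  prop_of_bounded_of_prop_homology P ((bounded_iff_finite_homology E).2 hE.2) fun i =>
    have := hE.1 i
    prop_singleFunctor_obj_of_finite P hP _

end Modules

open DerivedCategory in
lemma prop_singleFunctor_map_of_mem_thickClosure [Abelian C] [HasDerivedCategory C]
    {D : Type u₂} [Category.{v₂} D] [Abelian D] [HasDerivedCategory D]
    (F : C ⥤ D) [F.Additive] [PreservesFiniteLimits F] [PreservesFiniteColimits F]
    (P : ObjectProperty (DerivedCategory D)) [P.IsTriangulated] [P.IsStableUnderRetracts]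
    {G : CochainComplex C ℤ}
    (hG : P (Q.obj ((F.mapHomologicalComplex (ComplexShape.up ℤ)).obj G)))
    {M : C} (hM : (singleFunctor C 0).obj M ∈ thickClosure {Q.obj G}) :
    P ((singleFunctor D 0).obj (F.obj M)) :=
  P.prop_of_iso ((F.mapDerivedCategorySingleFunctor 0).app M)
    (prop_obj_of_mem_thickClosure_singleton F.mapDerivedCategory P hM
      (P.prop_of_iso (F.mapDerivedCategoryFactors.symm.app G) hG))

theorem statement17_general {R : Type u} [CommRing R] [IsNoetherianRing R]
    [HasDerivedCategory (ModuleCat.{u} R)] {ι : Type*} (p : ι → Ideal R)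
    (hp : ∀ q ∈ minimalPrimes R, ∃ i, p i ≤ q)
    [∀ i, HasDerivedCategory (ModuleCat.{u} (R ⧸ p i))]
    (G : ∀ i, CochainComplex (ModuleCat.{u} (R ⧸ p i)) ℤ)
    [HasCoproduct fun i =>
      ((ModuleCat.restrictScalars.{u} (Ideal.Quotient.mk (p i))).mapHomologicalComplex
        (ComplexShape.up ℤ)).obj (G i)]
    (hG : ∀ (i : ι) (X : DerivedCategory (ModuleCat.{u} (R ⧸ p i))),
      HasBoundedFGHomology (R ⧸ p i) X → X ∈ thickClosure {DerivedCategory.Q.obj (G i)})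
    (E : DerivedCategory (ModuleCat.{u} R)) (hE : HasBoundedFGHomology R E) :
    E ∈ thickClosure
      {DerivedCategory.Q.obj (∐ fun i =>
        ((ModuleCat.restrictScalars.{u} (Ideal.Quotient.mk (p i))).mapHomologicalComplex
          (ComplexShape.up ℤ)).obj (G i))} := by
  classical
  set K : ι → CochainComplex (ModuleCat.{u} R) ℤ := fun i =>
    ((ModuleCat.restrictScalars.{u} (Ideal.Quotient.mk (p i))).mapHomologicalComplex
      (ComplexShape.up ℤ)).obj (G i)
  set P := (ObjectProperty.singleton (DerivedCategory.Q.obj (∐ K))).triangEnvelope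
  have hK (i : ι) : P (DerivedCategory.Q.obj (K i)) := by
    let r : Retract (K i) (∐ K) := ⟨Sigma.ι K i, Sigma.π K i, Sigma.ι_π_eq_id K i⟩
    exact P.prop_of_retract (r.map DerivedCategory.Q)
      (ObjectProperty.le_triangEnvelope _ _ ((ObjectProperty.singleton_iff _ _).2 rfl))
  refine mem_thickClosure_singleton_iff.2 (prop_of_hasBoundedFGHomology P (fun q hq => ?_) hE)
  obtain ⟨q', hq', hq'q⟩ := Ideal.exists_minimalPrimes_le (bot_le : ⊥ ≤ q)
  obtain ⟨i, hi⟩ := hp q' hq'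
  have htorsion : Module.IsTorsionBySet R (R ⧸ q) (p i) :=
    (Module.isTorsionBySet_iff_subset_annihilator _ _).2
      ((hi.trans hq'q).trans Ideal.annihilator_quotient.ge)
  obtain ⟨N, _, ⟨e⟩⟩ := exists_finite_restrictScalars_iso (.of R (R ⧸ q)) htorsion
  exact P.prop_of_iso ((DerivedCategory.singleFunctor _ 0).mapIso e)
    (prop_singleFunctor_map_of_mem_thickClosure _ P (hK i)
      (hG i _ (hasBoundedFGHomology_singleFunctor_obj N)))

/--
let `R` be a commutative Noetherian ring of finite Krull dimension with
minimal primes `𝔭 1, …, 𝔭 n`. For each `i`, let `G i` be a (complex representing an)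
object of `D(Mod (R ⧸ 𝔭 i))` with bounded finitely generated homology which classically
generates all objects of `D(Mod (R ⧸ 𝔭 i))` with bounded finitely generated homology.
Then every object of `D(Mod R)` with bounded finitely generated homology lies in the
smallest thick subcategory of `D(Mod R)` containing the direct sum `⊕ᵢ (G i)`, each
`G i` being regarded as a complex of `R`-modules via restriction of scalars along
`R → R ⧸ 𝔭 i`.
-/
theorem statement17 (R : Type u) [CommRing R] [IsNoetherianRing R]
    (hdim : ringKrullDim R < ⊤)
    [HasDerivedCategory (ModuleCat.{u} R)]
    (n : ℕ) (p : Fin n → Ideal R) (hprime : ∀ i, (p i).IsPrime)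
    (hmin : {q : Ideal R | q ∈ minimalPrimes R} = Set.range p)
    [∀ i, HasDerivedCategory (ModuleCat.{u} (R ⧸ p i))]
    (G : ∀ i, CochainComplex (ModuleCat.{u} (R ⧸ p i)) ℤ)
    (hGfg : ∀ i, HasBoundedFGHomology (R ⧸ p i) (DerivedCategory.Q.obj (G i)))
    (hGgen : ∀ (i : Fin n) (X : DerivedCategory (ModuleCat.{u} (R ⧸ p i))),
      HasBoundedFGHomology (R ⧸ p i) X →
      X ∈ thickClosure {DerivedCategory.Q.obj (G i)})
    (E : DerivedCategory (ModuleCat.{u} R)) (hE : HasBoundedFGHomology R E) :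
    E ∈ thickClosure
      {DerivedCategory.Q.obj (∐ (fun i : Fin n =>
        ((ModuleCat.restrictScalars.{u} (Ideal.Quotient.mk (p i))).mapHomologicalComplex
          (ComplexShape.up ℤ)).obj (G i)))} := by
  exact statement17_general p (fun q hq => (hmin ▸ hq : q ∈ Set.range p).imp fun _ h => h.le)
    G hGgen E hE

end Stmt
end
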